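/- Every sequent Γ ⊢ A derivable in the sequent calculus of Intuitionistic Light Affine Logic has a derivation that does not use the Cut rule. -/

import Mathlib

/-!
The second-order quantifier is impredicative, so no induction on the size of the cut formula is
available.  The proof is semantic instead (phase semantics with candidates, after Okada).

A truth value is a set of contexts (finite multisets of formulas) that is closed: it contains
every `m` such that each cut-free provability test `_, Γ ⊢ C` passed by all its members is passed
by `m`.  Formulas are interpreted by closed sets (`interp`):

* `⊸` by the residual, `⊗` by the closure of the sums,
* `!X` by the closure of `{!B}` for `{B} ∈ X`, together with the empty context if it is in `X`,
* `§X` by the closure of all `!Δ, §Γ` with `Δ, Γ ∈ X`,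
* `∀` by the intersection over all candidates, a candidate for a formula `B` being a closed set
  which contains `{B}` and all of whose members prove `B` without cut.

Two facts give the theorem.  By `interp_cand`, the interpretation of `A` is a candidate for `A`;
for `∀` this uses a fresh variable, together with the stability of cut-free derivability under
substitution (`Deriv.ps`).  By `soundness`, every rule, cut included, is valid: members of the
interpretations of the hypotheses add up to a member of the interpretation of the conclusion.
Since each hypothesis `{A}` belongs to its own interpretation, a derivable `Γ ⊢ A` has `Γ` in the
interpretation of `A`, and hence a cut-free proof.
-/

/-- Formulas of Intuitionistic Light Affine Logic (ILAL), with de Bruijn indices for the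
propositional variables: `A ::= α | A ⊸ A | A ⊗ A | !A | §A | ∀α.A`. -/
inductive Fm : Type
  | var : ℕ → Fm
  | limp : Fm → Fm → Fm
  | tens : Fm → Fm → Fm
  | bang : Fm → Fm
  | sect : Fm → Fm
  | all : Fm → Fm
deriving DecidableEq

/-- Lift the propositional variables `≥ c` by one. -/
def Fm.lift (c : ℕ) : Fm → Fm
  | .var n => if n < c then .var n else .var (n + 1)
  | .limp a b => .limp (a.lift c) (b.lift c)
  | .tens a b => .tens (a.lift c) (b.lift c)
  | .bang a => .bang (a.lift c)
  | .sect a => .sect (a.lift c)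
  | .all a => .all (a.lift (c + 1))

/-- `Fm.subst c B A` is `A[B/α_c]`: substitute `B` for the propositional variable `c`
in `A`, decrementing the higher variables. -/
def Fm.subst : ℕ → Fm → Fm → Fm
  | c, B, .var n => if n < c then .var n else if n = c then B else .var (n - 1)
  | c, B, .limp a b => .limp (Fm.subst c B a) (Fm.subst c B b)
  | c, B, .tens a b => .tens (Fm.subst c B a) (Fm.subst c B b)
  | c, B, .bang a => .bang (Fm.subst c B a)
  | c, B, .sect a => .sect (Fm.subst c B a)
  | c, B, .all a => .all (Fm.subst (c + 1) (B.lift 0) a)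

/-- The sequent calculus of Intuitionistic Light Affine Logic.  `Deriv cutOK Γ A` means
that the sequent `Γ ⊢ A` is derivable, using the `Cut` rule only when `cutOK = true`.
The rules are: axiom, cut, exchange, unconstrained weakening, contraction on `!`-formulas,
`⊸`-left/right, `⊗`-left/right, the `!`-rule (with at most one assumption), the `§`-rule,
and `∀`-left/right. -/
inductive Deriv : Bool → List Fm → Fm → Prop
  | ax (cutOK : Bool) (A : Fm) : Deriv cutOK [A] A
  | cut {Γ Δ : List Fm} {A B : Fm} :
      Deriv true Γ A → Deriv true (A :: Δ) B → Deriv true (Δ ++ Γ) B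
  | exch {cutOK : Bool} {Γ₁ Γ₂ : List Fm} {A B C : Fm} :
      Deriv cutOK (Γ₁ ++ A :: B :: Γ₂) C → Deriv cutOK (Γ₁ ++ B :: A :: Γ₂) C
  | weak {cutOK : Bool} {Γ : List Fm} {B : Fm} (A : Fm) :
      Deriv cutOK Γ B → Deriv cutOK (A :: Γ) B
  | contr {cutOK : Bool} {Γ : List Fm} {A B : Fm} :
      Deriv cutOK (.bang A :: .bang A :: Γ) B → Deriv cutOK (.bang A :: Γ) B
  | limpL {cutOK : Bool} {Γ Δ : List Fm} {A B C : Fm} :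
      Deriv cutOK Γ A → Deriv cutOK (B :: Δ) C →
      Deriv cutOK (.limp A B :: Δ ++ Γ) C
  | limpR {cutOK : Bool} {Γ : List Fm} {A B : Fm} :
      Deriv cutOK (A :: Γ) B → Deriv cutOK Γ (.limp A B)
  | tensL {cutOK : Bool} {Γ : List Fm} {A B C : Fm} :
      Deriv cutOK (A :: B :: Γ) C → Deriv cutOK (.tens A B :: Γ) C
  | tensR {cutOK : Bool} {Γ Δ : List Fm} {A B : Fm} :
      Deriv cutOK Γ A → Deriv cutOK Δ B → Deriv cutOK (Γ ++ Δ) (.tens A B)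
  | bangNil {cutOK : Bool} {A : Fm} :
      Deriv cutOK [] A → Deriv cutOK [] (.bang A)
  | bangOne {cutOK : Bool} {A B : Fm} :
      Deriv cutOK [B] A → Deriv cutOK [.bang B] (.bang A)
  | sectR {cutOK : Bool} {Δ Γ : List Fm} {C : Fm} :
      Deriv cutOK (Δ ++ Γ) C →
      Deriv cutOK (Δ.map Fm.bang ++ Γ.map Fm.sect) (.sect C)
  | allL {cutOK : Bool} {Γ : List Fm} {A B C : Fm} :
      Deriv cutOK (Fm.subst 0 B A :: Γ) C → Deriv cutOK (.all A :: Γ) C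
  | allR {cutOK : Bool} {Γ : List Fm} {A : Fm} :
      Deriv cutOK (Γ.map (Fm.lift 0)) A → Deriv cutOK Γ (.all A)

/-! ### Parallel substitution -/

/-- Extend an assignment of the variables by the value `x` for the variable `0`, shifting the
others by one. -/
def scons {α : Type*} (x : α) (f : ℕ → α) : ℕ → α
  | 0 => x
  | n + 1 => f n

/-- The action of a substitution under a quantifier. -/
def up (σ : ℕ → Fm) : ℕ → Fm := scons (.var 0) (fun n => (σ n).lift 0)

/-- Parallel substitution of `σ n` for every variable `n`. -/
def Fm.ps : Fm → (ℕ → Fm) → Fm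
  | .var n, σ => σ n
  | .limp a b, σ => .limp (a.ps σ) (b.ps σ)
  | .tens a b, σ => .tens (a.ps σ) (b.ps σ)
  | .bang a, σ => .bang (a.ps σ)
  | .sect a, σ => .sect (a.ps σ)
  | .all a, σ => .all (a.ps (up σ))

theorem lift_eq_aux (A : Fm) (c : ℕ) :
    A.lift c = A.ps (fun n => if n < c then .var n else .var (n + 1)) := by
  induction A generalizing c with
  | var n => rfl
  | limp a b iha ihb => simp [Fm.lift, Fm.ps, iha c, ihb c]
  | tens a b iha ihb => simp [Fm.lift, Fm.ps, iha c, ihb c]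
  | bang a ih => simp [Fm.lift, Fm.ps, ih c]
  | sect a ih => simp [Fm.lift, Fm.ps, ih c]
  | all a ih =>
    simp only [Fm.lift, Fm.ps, ih (c + 1)]
    congr 2
    funext n
    cases n with
    | zero => simp [up, scons]
    | succ n => by_cases h : n < c <;> simp [up, scons, Fm.lift, h]

theorem lift_eq (A : Fm) : A.lift 0 = A.ps (fun n => .var (n + 1)) := by
  simp [lift_eq_aux]

theorem subst_eq_aux (A B : Fm) (c : ℕ) :
    Fm.subst c B A =
      A.ps (fun n => if n < c then .var n else if n = c then B else .var (n - 1)) := by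
  induction A generalizing c B with
  | var n => rfl
  | limp a b iha ihb => simp [Fm.subst, Fm.ps, iha B c, ihb B c]
  | tens a b iha ihb => simp [Fm.subst, Fm.ps, iha B c, ihb B c]
  | bang a ih => simp [Fm.subst, Fm.ps, ih B c]
  | sect a ih => simp [Fm.subst, Fm.ps, ih B c]
  | all a ih =>
    simp only [Fm.subst, Fm.ps, ih (B.lift 0) (c + 1)]
    congr 2
    funext n
    cases n with
    | zero => simp [up, scons]
    | succ n =>
      by_cases h : n < c
      · simp [up, scons, Fm.lift, h]
      · by_cases h' : n = c
        · simp [up, scons, h']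
        · have : n - 1 + 1 = n := by omega
          simp [up, scons, Fm.lift, h, h', this]

theorem subst_eq (A B : Fm) : Fm.subst 0 B A = A.ps (scons B .var) := by
  rw [subst_eq_aux]
  congr 1
  funext n
  cases n <;> simp [scons]

theorem ps_var (A : Fm) : A.ps .var = A := by
  induction A with
  | var n => rfl
  | limp a b iha ihb => simp [Fm.ps, iha, ihb]
  | tens a b iha ihb => simp [Fm.ps, iha, ihb]
  | bang a ih => simp [Fm.ps, ih]
  | sect a ih => simp [Fm.ps, ih]
  | all a ih =>
    have : up .var = .var := by
      funext n
      cases n <;> simp [up, scons, Fm.lift]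
    simp [Fm.ps, ih, this]

/-- The action of a renaming under a quantifier. -/
def upr (r : ℕ → ℕ) : ℕ → ℕ := scons 0 (fun n => r n + 1)

theorem up_ren (r : ℕ → ℕ) : up (fun n => .var (r n)) = fun n => .var (upr r n) := by
  funext n
  cases n <;> simp [up, upr, scons, Fm.lift]

theorem ren_ps (A : Fm) (r : ℕ → ℕ) (τ : ℕ → Fm) :
    (A.ps (fun n => .var (r n))).ps τ = A.ps (fun n => τ (r n)) := by
  induction A generalizing r τ with
  | var n => rfl
  | limp a b iha ihb => simp [Fm.ps, iha, ihb]
  | tens a b iha ihb => simp [Fm.ps, iha, ihb]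
  | bang a ih => simp [Fm.ps, ih]
  | sect a ih => simp [Fm.ps, ih]
  | all a ih =>
    simp only [Fm.ps, up_ren, ih]
    congr 2
    funext n
    cases n <;> simp [up, upr, scons]

theorem lift_ps_up (A : Fm) (τ : ℕ → Fm) :
    (A.lift 0).ps (up τ) = A.ps (fun n => (τ n).lift 0) := by
  rw [lift_eq, ren_ps]
  rfl

theorem ps_ren (A : Fm) (σ : ℕ → Fm) (r : ℕ → ℕ) :
    (A.ps σ).ps (fun n => .var (r n)) = A.ps (fun n => (σ n).ps (fun n => .var (r n))) := by
  induction A generalizing σ r with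
  | var n => rfl
  | limp a b iha ihb => simp [Fm.ps, iha, ihb]
  | tens a b iha ihb => simp [Fm.ps, iha, ihb]
  | bang a ih => simp [Fm.ps, ih]
  | sect a ih => simp [Fm.ps, ih]
  | all a ih =>
    simp only [Fm.ps, up_ren, ih]
    congr 2
    funext n
    cases n with
    | zero => rfl
    | succ n => simp only [up, scons, lift_eq, ren_ps, upr]

theorem ps_lift (A : Fm) (σ : ℕ → Fm) :
    (A.ps σ).lift 0 = A.ps (fun n => (σ n).lift 0) := by
  simp only [lift_eq, ps_ren]

theorem ps_ps (A : Fm) (σ τ : ℕ → Fm) :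
    (A.ps σ).ps τ = A.ps (fun n => (σ n).ps τ) := by
  induction A generalizing σ τ with
  | var n => rfl
  | limp a b iha ihb => simp [Fm.ps, iha, ihb]
  | tens a b iha ihb => simp [Fm.ps, iha, ihb]
  | bang a ih => simp [Fm.ps, ih]
  | sect a ih => simp [Fm.ps, ih]
  | all a ih =>
    simp only [Fm.ps, ih]
    congr 2
    funext n
    cases n with
    | zero => rfl
    | succ n =>
      change ((σ n).lift 0).ps (up τ) = ((σ n).ps τ).lift 0
      rw [lift_ps_up, ps_lift]

theorem lift_ps_scons (A B : Fm) (σ : ℕ → Fm) : (A.lift 0).ps (scons B σ) = A.ps σ := by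
  rw [lift_eq, ren_ps]
  rfl

theorem subst_up (A B : Fm) (σ : ℕ → Fm) :
    Fm.subst 0 B (A.ps (up σ)) = A.ps (scons B σ) := by
  rw [subst_eq, ps_ps]
  congr 1
  funext n
  cases n with
  | zero => rfl
  | succ n =>
    change ((σ n).lift 0).ps (scons B .var) = σ n
    rw [lift_ps_scons, ps_var]

theorem subst_ps (A B : Fm) (σ : ℕ → Fm) :
    (Fm.subst 0 B A).ps σ = Fm.subst 0 (B.ps σ) (A.ps (up σ)) := by
  rw [subst_up, subst_eq, ps_ps]
  congr 1
  funext n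
  cases n <;> rfl

/-- A formula has finitely many free variables. -/
theorem ps_local (A : Fm) :
    ∃ k, ∀ σ τ : ℕ → Fm, (∀ n < k, σ n = τ n) → A.ps σ = A.ps τ := by
  induction A with
  | var n => exact ⟨n + 1, fun σ τ h => h n (by omega)⟩
  | limp a b iha ihb =>
    obtain ⟨k, hk⟩ := iha
    obtain ⟨l, hl⟩ := ihb
    refine ⟨max k l, fun σ τ h => ?_⟩
    simp only [Fm.ps]
    rw [hk σ τ fun n hn => h n (by omega), hl σ τ fun n hn => h n (by omega)]
  | tens a b iha ihb =>
    obtain ⟨k, hk⟩ := iha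
    obtain ⟨l, hl⟩ := ihb
    refine ⟨max k l, fun σ τ h => ?_⟩
    simp only [Fm.ps]
    rw [hk σ τ fun n hn => h n (by omega), hl σ τ fun n hn => h n (by omega)]
  | bang a ih =>
    obtain ⟨k, hk⟩ := ih
    exact ⟨k, fun σ τ h => by simp only [Fm.ps]; rw [hk σ τ h]⟩
  | sect a ih =>
    obtain ⟨k, hk⟩ := ih
    exact ⟨k, fun σ τ h => by simp only [Fm.ps]; rw [hk σ τ h]⟩
  | all a ih =>
    obtain ⟨k, hk⟩ := ih
    refine ⟨k, fun σ τ h => ?_⟩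
    simp only [Fm.ps]
    rw [hk (up σ) (up τ)]
    intro n hn
    cases n with
    | zero => rfl
    | succ n => simp only [up, scons]; rw [h n (by omega)]

theorem ps_local_multiset (m : Multiset Fm) :
    ∃ k, ∀ A ∈ m, ∀ σ τ : ℕ → Fm, (∀ n < k, σ n = τ n) → A.ps σ = A.ps τ := by
  induction m using Multiset.induction with
  | empty => exact ⟨0, by simp⟩
  | cons B m ih =>
    obtain ⟨k, hk⟩ := ih
    obtain ⟨l, hl⟩ := ps_local B
    refine ⟨max k l, fun A hA σ τ h => ?_⟩
    rcases Multiset.mem_cons.1 hA with rfl | hA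
    · exact hl σ τ fun n hn => h n (by omega)
    · exact hk A hA σ τ fun n hn => h n (by omega)

theorem Deriv.ps {b : Bool} {Γ : List Fm} {A : Fm} (h : Deriv b Γ A) (σ : ℕ → Fm) :
    Deriv b (Γ.map fun B => B.ps σ) (A.ps σ) := by
  induction h generalizing σ with
  | ax b A => exact .ax _ _
  | cut _ _ ih₁ ih₂ => rw [List.map_append]; exact .cut (ih₁ σ) (ih₂ σ)
  | exch _ ih =>
    have := ih σ
    simp only [List.map_append, List.map_cons] at this ⊢
    exact .exch this
  | weak A _ ih => exact .weak _ (ih σ)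
  | contr _ ih => exact .contr (ih σ)
  | limpL _ _ ih₁ ih₂ =>
    simp only [List.map_append, List.map_cons, Fm.ps]
    exact .limpL (ih₁ σ) (ih₂ σ)
  | limpR _ ih => exact .limpR (ih σ)
  | tensL _ ih => exact .tensL (ih σ)
  | tensR _ _ ih₁ ih₂ => rw [List.map_append]; exact .tensR (ih₁ σ) (ih₂ σ)
  | bangNil _ ih => exact .bangNil (ih σ)
  | bangOne _ ih => exact .bangOne (ih σ)
  | @sectR _ Δ Γ C _ ih =>
    have := ih σ
    rw [List.map_append] at this
    have := Deriv.sectR this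
    simp only [List.map_append, List.map_map] at this ⊢
    exact this
  | @allL _ Γ A B C _ ih =>
    have := ih σ
    rw [List.map_cons, subst_ps] at this
    exact .allL this
  | @allR _ Γ A _ ih =>
    have := ih (up σ)
    refine .allR ?_
    rw [List.map_map] at this ⊢
    convert this using 2
    funext B
    simp only [Function.comp]
    rw [lift_ps_up, ps_lift]

/-! ### Cut-free provability on multisets -/

theorem Deriv.perm_aux {b : Bool} {C : Fm} {l l' : List Fm} (h : l.Perm l') :
    ∀ p : List Fm, Deriv b (p ++ l) C → Deriv b (p ++ l') C := by
  induction h with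
  | nil => exact fun p => id
  | cons a _ ih => intro p hp; simpa using ih (p ++ [a]) (by simpa using hp)
  | swap a b l => intro p hp; exact .exch hp
  | trans _ _ ih₁ ih₂ => intro p hp; exact ih₂ p (ih₁ p hp)

theorem Deriv.perm {b : Bool} {C : Fm} {l l' : List Fm} (h : l.Perm l')
    (hl : Deriv b l C) : Deriv b l' C := perm_aux h [] hl

/-- Cut-free provability of `m ⊢ A` for a multiset `m` of hypotheses. -/
def Cf (m : Multiset Fm) (A : Fm) : Prop := ∃ l : List Fm, (l : Multiset Fm) = m ∧ Deriv false l A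

theorem cf_coe {l : List Fm} {A : Fm} : Cf (l : Multiset Fm) A ↔ Deriv false l A :=
  ⟨fun ⟨_, h, d⟩ => d.perm (Multiset.coe_eq_coe.1 h), fun d => ⟨l, rfl, d⟩⟩

theorem Cf.weak {m : Multiset Fm} {A : Fm} (h : Cf m A) (n : Multiset Fm) : Cf (n + m) A := by
  induction n using Multiset.induction with
  | empty => simpa using h
  | cons B n ih =>
    obtain ⟨l, hl, d⟩ := ih
    exact ⟨B :: l, by rw [Multiset.cons_add, ← hl]; rfl, .weak B d⟩

theorem Cf.contr {m : Multiset Fm} {A C : Fm} (h : Cf ({.bang A} + ({.bang A} + m)) C) :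
    Cf ({.bang A} + m) C := by
  induction m using Quotient.inductionOn with
  | _ l => exact cf_coe.2 (.contr (cf_coe.1 h))

theorem Cf.limpL {m n : Multiset Fm} {A B C : Fm} (h : Cf m A) (h' : Cf ({B} + n) C) :
    Cf ({.limp A B} + m + n) C := by
  rw [add_assoc, add_comm m]
  induction m using Quotient.inductionOn with
  | _ l =>
    induction n using Quotient.inductionOn with
    | _ l' => exact cf_coe.2 (.limpL (Γ := l) (Δ := l') (cf_coe.1 h) (cf_coe.1 h'))

theorem Cf.limpR {m : Multiset Fm} {A B : Fm} (h : Cf (m + {A}) B) : Cf m (.limp A B) := by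
  rw [add_comm] at h
  induction m using Quotient.inductionOn with
  | _ l => exact cf_coe.2 (.limpR (cf_coe.1 h))

theorem Cf.tensL {m : Multiset Fm} {A B C : Fm} (h : Cf ({A} + {B} + m) C) :
    Cf ({.tens A B} + m) C := by
  rw [add_assoc] at h
  induction m using Quotient.inductionOn with
  | _ l => exact cf_coe.2 (.tensL (cf_coe.1 h))

theorem Cf.tensR {m n : Multiset Fm} {A B : Fm} (h : Cf m A) (h' : Cf n B) :
    Cf (m + n) (.tens A B) := by
  obtain ⟨l, rfl, d⟩ := h
  obtain ⟨l', rfl, d'⟩ := h'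
  exact cf_coe.2 (.tensR d d')

theorem Cf.sectR {m n : Multiset Fm} {A : Fm} (h : Cf (m + n) A) :
    Cf (m.map .bang + n.map .sect) (.sect A) := by
  induction m using Quotient.inductionOn with
  | _ l =>
    induction n using Quotient.inductionOn with
    | _ l' => exact cf_coe.2 (.sectR (cf_coe.1 h))

theorem Cf.allL {m : Multiset Fm} {A B C : Fm} (h : Cf ({Fm.subst 0 B A} + m) C) :
    Cf ({.all A} + m) C := by
  induction m using Quotient.inductionOn with
  | _ l => exact cf_coe.2 (.allL (cf_coe.1 h))

/-- A fresh variable can serve as the eigenvariable of `∀`-right: it suffices to prove the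
instances of `A` at variables. -/
theorem Cf.allR {m : Multiset Fm} {A : Fm} (h : ∀ z : ℕ, Cf m (Fm.subst 0 (.var z) A)) :
    Cf m (.all A) := by
  obtain ⟨k, hk⟩ := ps_local_multiset m
  obtain ⟨l, hl⟩ := ps_local A
  obtain ⟨L, rfl, d⟩ := h (max k l)
  refine cf_coe.2 (.allR ?_)
  -- The renaming that sends the fresh variable to `0` and lifts all the others.
  have d' := d.ps (fun n => if n = max k l then .var 0 else .var (n + 1))
  convert d' using 1
  · refine List.map_congr_left fun B hB => ?_
    rw [lift_eq]
    refine hk B (by simpa using hB) _ _ fun n hn => ?_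
    rw [if_neg (by omega)]
  · rw [subst_eq, ps_ps]
    conv_lhs => rw [← ps_var A]
    refine hl _ _ fun n hn => ?_
    cases n with
    | zero => simp [scons, Fm.ps]
    | succ n =>
      simp only [scons, Fm.ps]
      rw [if_neg (by omega)]

/-! ### Closed sets and candidates -/

/-- The closure of a set of contexts: the contexts passing every cut-free provability test
`_, Γ ⊢ C` that all members of the set pass. -/
def Cl (X : Set (Multiset Fm)) : Set (Multiset Fm) :=
  {m | ∀ Γ C, (∀ x ∈ X, Cf (x + Γ) C) → Cf (m + Γ) C}

/-- Closed sets of contexts, the truth values of the semantics. -/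
def Closed (X : Set (Multiset Fm)) : Prop := Cl X ⊆ X

theorem subset_cl (X : Set (Multiset Fm)) : X ⊆ Cl X := fun x hx _ _ h => h x hx

theorem closed_cl (X : Set (Multiset Fm)) : Closed (Cl X) :=
  fun _ hm Γ C h => hm Γ C fun _ hx => hx Γ C h

theorem closed_cf (A : Fm) : Closed {m | Cf m A} := fun m hm => by
  simpa using hm 0 A (fun x hx => by simpa using hx)

theorem Closed.step {Y : Set (Multiset Fm)} (hY : Closed Y) {x m : Multiset Fm} (hx : x ∈ Y)
    (h : ∀ Γ C, Cf (x + Γ) C → Cf (m + Γ) C) : m ∈ Y :=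
  hY fun Γ C hc => h Γ C (hc x hx)

theorem Closed.weak {Y : Set (Multiset Fm)} (hY : Closed Y) {x : Multiset Fm} (hx : x ∈ Y)
    (n : Multiset Fm) : n + x ∈ Y :=
  hY.step hx fun Γ C h => by rw [add_assoc]; exact h.weak n

/-- Elimination from a closure, in an arbitrary context `b`. -/
theorem Closed.elim {G Y : Set (Multiset Fm)} (hY : Closed Y) {a b : Multiset Fm}
    (ha : a ∈ Cl G) (h : ∀ g ∈ G, g + b ∈ Y) : a + b ∈ Y :=
  hY fun Γ C hc => by
    rw [add_assoc]
    exact ha _ _ fun g hg => by rw [← add_assoc]; exact hc _ (h g hg)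

theorem Closed.elim_zero {G Y : Set (Multiset Fm)} (hY : Closed Y) {a : Multiset Fm}
    (ha : a ∈ Cl G) (h : ∀ g ∈ G, g ∈ Y) : a ∈ Y := by
  simpa using hY.elim (b := 0) ha (by simpa using h)

/-- `X` is a candidate for the formula `B`. -/
structure Cand (B : Fm) (X : Set (Multiset Fm)) : Prop where
  closed : Closed X
  mem : {B} ∈ X
  cf : ∀ m ∈ X, Cf m B

theorem cand_cf (B : Fm) : Cand B {m | Cf m B} :=
  ⟨closed_cf B, ⟨[B], rfl, .ax _ _⟩, fun _ h => h⟩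

/-! ### The interpretation -/

/-- The residual of two sets of contexts, interpreting `⊸`. -/
def limpS (X Y : Set (Multiset Fm)) : Set (Multiset Fm) := {m | ∀ x ∈ X, m + x ∈ Y}

/-- The generators of the interpretation of `⊗`. -/
def tensG (X Y : Set (Multiset Fm)) : Set (Multiset Fm) := {m | ∃ x ∈ X, ∃ y ∈ Y, m = x + y}

/-- The generators of the interpretation of `!`, one kind for each form of the `!`-rule. -/
def bangG (X : Set (Multiset Fm)) : Set (Multiset Fm) :=
  {m | (∃ B : Fm, {B} ∈ X ∧ m = {.bang B}) ∨ (0 ∈ X ∧ m = 0)}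

/-- The generators of the interpretation of `§`. -/
def sectG (X : Set (Multiset Fm)) : Set (Multiset Fm) :=
  {m | ∃ d g : Multiset Fm, d + g ∈ X ∧ m = d.map .bang + g.map .sect}

/-- The interpretation of a formula under an assignment of sets of contexts to its free
variables.  Quantified variables range over the candidates for arbitrary formulas. -/
def interp : Fm → (ℕ → Set (Multiset Fm)) → Set (Multiset Fm)
  | .var n, ρ => ρ n
  | .limp a b, ρ => limpS (interp a ρ) (interp b ρ)
  | .tens a b, ρ => Cl (tensG (interp a ρ) (interp b ρ))
  | .bang a, ρ => Cl (bangG (interp a ρ))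
  | .sect a, ρ => Cl (sectG (interp a ρ))
  | .all a, ρ => {m | ∀ B X, Cand B X → m ∈ interp a (scons X ρ)}

theorem interp_ren (A : Fm) (r : ℕ → ℕ) (ρ : ℕ → Set (Multiset Fm)) :
    interp (A.ps fun n => .var (r n)) ρ = interp A (fun n => ρ (r n)) := by
  induction A generalizing r ρ with
  | var n => rfl
  | limp a b iha ihb => simp [Fm.ps, interp, iha, ihb]
  | tens a b iha ihb => simp [Fm.ps, interp, iha, ihb]
  | bang a ih => simp [Fm.ps, interp, ih]
  | sect a ih => simp [Fm.ps, interp, ih]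
  | all a ih =>
    have (X : Set (Multiset Fm)) :
        (fun n => scons X ρ (upr r n)) = scons X (fun n => ρ (r n)) := by
      funext n
      cases n <;> rfl
    simp only [Fm.ps, interp, up_ren, ih, this]

theorem interp_lift (A : Fm) (X : Set (Multiset Fm)) (ρ : ℕ → Set (Multiset Fm)) :
    interp (A.lift 0) (scons X ρ) = interp A ρ := by
  rw [lift_eq, interp_ren]
  rfl

theorem interp_ps (A : Fm) (τ : ℕ → Fm) (ρ : ℕ → Set (Multiset Fm)) :
    interp (A.ps τ) ρ = interp A (fun n => interp (τ n) ρ) := by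
  induction A generalizing τ ρ with
  | var n => rfl
  | limp a b iha ihb => simp [Fm.ps, interp, iha, ihb]
  | tens a b iha ihb => simp [Fm.ps, interp, iha, ihb]
  | bang a ih => simp [Fm.ps, interp, ih]
  | sect a ih => simp [Fm.ps, interp, ih]
  | all a ih =>
    have (X : Set (Multiset Fm)) :
        (fun n => interp (up τ n) (scons X ρ)) = scons X (fun n => interp (τ n) ρ) := by
      funext n
      cases n with
      | zero => rfl
      | succ n => exact interp_lift _ _ _
    simp only [Fm.ps, interp, ih, this]

theorem interp_subst (A B : Fm) (ρ : ℕ → Set (Multiset Fm)) :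
    interp (Fm.subst 0 B A) ρ = interp A (scons (interp B ρ) ρ) := by
  rw [subst_eq, interp_ps]
  congr 1
  funext n
  cases n <;> rfl

/-- If every `ρ n` is a candidate for `σ n`, then the interpretation of `A` under `ρ` is a
candidate for the instance `A.ps σ`. -/
theorem interp_cand (A : Fm) (σ : ℕ → Fm) (ρ : ℕ → Set (Multiset Fm))
    (hρ : ∀ n, Cand (σ n) (ρ n)) : Cand (A.ps σ) (interp A ρ) := by
  induction A generalizing σ ρ with
  | var n => exact hρ n
  | limp a b iha ihb =>
    have ha := iha σ ρ hρ
    have hb := ihb σ ρ hρ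
    refine ⟨fun m hm x hx => ?_, fun x hx => ?_, fun m hm => ?_⟩
    · exact hb.closed.elim hm fun g hg => hg x hx
    · exact hb.closed.step hb.mem fun Γ C h => (ha.cf x hx).limpL h
    · exact (hb.cf _ (hm _ ha.mem)).limpR
  | tens a b iha ihb =>
    have ha := iha σ ρ hρ
    have hb := ihb σ ρ hρ
    refine ⟨closed_cl _, ?_, fun m hm => ?_⟩
    · exact (closed_cl _).step (subset_cl _ ⟨_, ha.mem, _, hb.mem, rfl⟩) fun Γ C h => h.tensL
    · refine (closed_cf _).elim_zero hm ?_
      rintro _ ⟨x, hx, y, hy, rfl⟩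
      exact (ha.cf x hx).tensR (hb.cf y hy)
  | bang a ih =>
    have ha := ih σ ρ hρ
    refine ⟨closed_cl _, subset_cl _ (Or.inl ⟨_, ha.mem, rfl⟩), fun m hm => ?_⟩
    refine (closed_cf _).elim_zero hm ?_
    rintro _ (⟨B, hB, rfl⟩ | ⟨h0, rfl⟩)
    · exact cf_coe.2 (.bangOne (cf_coe.1 (ha.cf _ hB)))
    · exact cf_coe.2 (.bangNil (cf_coe.1 (ha.cf _ h0)))
  | sect a ih =>
    have ha := ih σ ρ hρ
    refine ⟨closed_cl _, subset_cl _ ⟨0, _, by simpa using ha.mem, by simp [Fm.ps]⟩,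
      fun m hm => ?_⟩
    refine (closed_cf _).elim_zero hm ?_
    rintro _ ⟨d, g, h, rfl⟩
    exact (ha.cf _ h).sectR
  | all a ih =>
    have ha (B : Fm) (X : Set (Multiset Fm)) (h : Cand B X) :
        Cand (a.ps (scons B σ)) (interp a (scons X ρ)) := by
      refine ih _ _ fun n => ?_
      cases n with
      | zero => exact h
      | succ n => exact hρ n
    refine ⟨fun m hm B X h => ?_, fun B X h => ?_, fun m hm => ?_⟩
    · exact (ha B X h).closed.elim_zero hm fun g hg => hg B X h
    · refine (ha B X h).closed.step (ha B X h).mem fun Γ C hc => ?_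
      rw [← subst_up] at hc
      exact hc.allL
    · refine Cf.allR fun z => ?_
      rw [subst_up]
      exact (ha _ _ (cand_cf _)).cf m (hm _ _ (cand_cf (.var z)))

/-! ### Soundness -/

/-- `InCtx ρ Γ m`: the context `m` is a sum of members of the interpretations of the formulas
in `Γ`. -/
def InCtx (ρ : ℕ → Set (Multiset Fm)) : List Fm → Multiset Fm → Prop
  | [], m => m = 0
  | A :: Γ, m => ∃ a b, a ∈ interp A ρ ∧ InCtx ρ Γ b ∧ m = a + b

theorem inCtx_append {ρ : ℕ → Set (Multiset Fm)} {Γ Δ : List Fm} {m : Multiset Fm} :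
    InCtx ρ (Γ ++ Δ) m ↔ ∃ a b, InCtx ρ Γ a ∧ InCtx ρ Δ b ∧ m = a + b := by
  induction Γ generalizing m with
  | nil => simp [InCtx]
  | cons A Γ ih =>
    simp only [List.cons_append, InCtx, ih]
    constructor
    · rintro ⟨a, _, ha, ⟨b, c, hb, hc, rfl⟩, rfl⟩
      exact ⟨a + b, c, ⟨a, b, ha, hb, rfl⟩, hc, (add_assoc _ _ _).symm⟩
    · rintro ⟨_, c, ⟨a, b, ha, hb, rfl⟩, hc, rfl⟩
      exact ⟨a, b + c, ha, ⟨b, c, hb, hc, rfl⟩, add_assoc _ _ _⟩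

theorem inCtx_lift {ρ : ℕ → Set (Multiset Fm)} {X : Set (Multiset Fm)} {Γ : List Fm}
    {m : Multiset Fm} (h : InCtx ρ Γ m) : InCtx (scons X ρ) (Γ.map (Fm.lift 0)) m := by
  induction Γ generalizing m with
  | nil => exact h
  | cons A Γ ih =>
    obtain ⟨a, b, ha, hb, rfl⟩ := h
    exact ⟨a, b, by rwa [interp_lift], ih hb, rfl⟩

/-- To place in a closed set a context that interprets `§Γ`, it suffices to treat the sums of
generators.  The extra context `n` collects the generators already chosen. -/
theorem sect_elim {ρ : ℕ → Set (Multiset Fm)} {Y : Set (Multiset Fm)} (hY : Closed Y)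
    (Γ : List Fm) {m n : Multiset Fm} (hm : InCtx ρ (Γ.map .sect) m)
    (h : ∀ d g, InCtx ρ Γ (d + g) → d.map .bang + g.map .sect + n ∈ Y) : m + n ∈ Y := by
  induction Γ generalizing m n with
  | nil =>
    obtain rfl : m = 0 := hm
    simpa using h 0 0 (by simp [InCtx])
  | cons A Γ ih =>
    obtain ⟨a, b, ha, hb, rfl⟩ := hm
    rw [add_assoc]
    refine hY.elim ha ?_
    rintro _ ⟨d, g, hdg, rfl⟩
    rw [add_left_comm]
    refine ih hb fun d' g' h' => ?_
    have := h (d + d') (g + g') ⟨d + g, d' + g', hdg, h', by abel⟩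
    rw [Multiset.map_add, Multiset.map_add] at this
    convert this using 1
    abel

/-- The analogue of `sect_elim` for the mixed hypotheses `!Δ, §Γ` of the `§`-rule. -/
theorem bang_sect_elim {ρ : ℕ → Set (Multiset Fm)} {Y : Set (Multiset Fm)} (hY : Closed Y)
    (Δ Γ : List Fm) {m n : Multiset Fm} (hm : InCtx ρ (Δ.map .bang ++ Γ.map .sect) m)
    (h : ∀ d g, InCtx ρ (Δ ++ Γ) (d + g) → d.map .bang + g.map .sect + n ∈ Y) :
    m + n ∈ Y := by
  induction Δ generalizing m n with
  | nil => exact sect_elim hY Γ hm h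
  | cons A Δ ih =>
    obtain ⟨a, b, ha, hb, rfl⟩ := hm
    rw [add_assoc]
    refine hY.elim ha ?_
    rintro _ (⟨B, hB, rfl⟩ | ⟨h0, rfl⟩)
    · rw [add_left_comm]
      refine ih hb fun d g h' => ?_
      have := h ({B} + d) g ⟨{B}, d + g, hB, h', by abel⟩
      rw [Multiset.map_add, Multiset.map_singleton] at this
      convert this using 1
      abel
    · rw [zero_add]
      exact ih hb fun d g h' => h d g ⟨0, d + g, h0, h', by simp⟩

/-- Every rule, including cut, is valid in the semantics.  The formulas `σ n` only serve to make
the `ρ n` candidates. -/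
theorem soundness {c : Bool} {Γ : List Fm} {A : Fm} (h : Deriv c Γ A) (σ : ℕ → Fm)
    (ρ : ℕ → Set (Multiset Fm)) (hρ : ∀ n, Cand (σ n) (ρ n)) (m : Multiset Fm)
    (hm : InCtx ρ Γ m) : m ∈ interp A ρ := by
  have cl (A : Fm) {σ : ℕ → Fm} {ρ : ℕ → Set (Multiset Fm)} (hρ : ∀ n, Cand (σ n) (ρ n)) :
      Closed (interp A ρ) := (interp_cand A σ ρ hρ).closed
  induction h generalizing σ ρ m with
  | ax _ A =>
    obtain ⟨a, b, ha, rfl, rfl⟩ := hm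
    simpa using ha
  | cut _ _ ih₁ ih₂ =>
    obtain ⟨a, b, ha, hb, rfl⟩ := inCtx_append.1 hm
    exact ih₂ σ ρ hρ _ ⟨b, a, ih₁ σ ρ hρ b hb, ha, add_comm _ _⟩
  | exch _ ih =>
    obtain ⟨a, _, ha, ⟨x, _, hx, ⟨y, b, hy, hb, rfl⟩, rfl⟩, rfl⟩ := inCtx_append.1 hm
    exact ih σ ρ hρ _
      (inCtx_append.2 ⟨a, _, ha, ⟨y, _, hy, ⟨x, b, hx, hb, rfl⟩, rfl⟩, by abel⟩)
  | weak A _ ih =>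
    obtain ⟨a, b, ha, hb, rfl⟩ := hm
    exact (cl _ hρ).weak (ih σ ρ hρ b hb) a
  | contr _ ih =>
    obtain ⟨a, b, ha, hb, rfl⟩ := hm
    refine (cl _ hρ).elim ha fun g hg => ?_
    have hgg := ih σ ρ hρ _ ⟨g, _, subset_cl _ hg, ⟨g, b, subset_cl _ hg, hb, rfl⟩, rfl⟩
    rcases hg with ⟨B, hB, rfl⟩ | ⟨h0, rfl⟩
    · refine (cl _ hρ).step hgg fun Γ C hc => ?_
      rw [add_assoc, add_assoc] at hc
      rw [add_assoc]
      exact hc.contr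
    · simpa using hgg
  | limpL _ _ ih₁ ih₂ =>
    obtain ⟨a, _, ha, hab, rfl⟩ := hm
    obtain ⟨x, y, hx, hy, rfl⟩ := inCtx_append.1 hab
    exact ih₂ σ ρ hρ _ ⟨a + y, x, ha y (ih₁ σ ρ hρ y hy), hx, by abel⟩
  | limpR _ ih => exact fun x hx => ih σ ρ hρ _ ⟨x, m, hx, hm, add_comm _ _⟩
  | tensL _ ih =>
    obtain ⟨a, b, ha, hb, rfl⟩ := hm
    refine (cl _ hρ).elim ha ?_
    rintro _ ⟨x, hx, y, hy, rfl⟩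
    exact ih σ ρ hρ _ ⟨x, _, hx, ⟨y, b, hy, hb, rfl⟩, add_assoc _ _ _⟩
  | tensR _ _ ih₁ ih₂ =>
    obtain ⟨a, b, ha, hb, rfl⟩ := inCtx_append.1 hm
    exact subset_cl _ ⟨a, ih₁ σ ρ hρ a ha, b, ih₂ σ ρ hρ b hb, rfl⟩
  | bangNil _ ih =>
    obtain rfl : m = 0 := hm
    exact subset_cl _ (Or.inr ⟨ih σ ρ hρ 0 rfl, rfl⟩)
  | bangOne _ ih =>
    obtain ⟨a, b, ha, rfl, rfl⟩ := hm
    rw [add_zero]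
    refine (closed_cl _).elim_zero ha ?_
    rintro _ (⟨B, hB, rfl⟩ | ⟨h0, rfl⟩)
    · exact subset_cl _ (Or.inl ⟨B, ih σ ρ hρ _ ⟨{B}, 0, hB, rfl, by simp⟩, rfl⟩)
    · exact subset_cl _ (Or.inr ⟨ih σ ρ hρ _ ⟨0, 0, h0, rfl, by simp⟩, rfl⟩)
  | @sectR _ Δ Γ C _ ih =>
    rw [← add_zero m]
    refine bang_sect_elim (closed_cl _) Δ Γ hm fun d g hdg => ?_
    rw [add_zero]
    exact subset_cl _ ⟨d, g, ih σ ρ hρ _ hdg, rfl⟩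
  | @allL _ Γ A B C _ ih =>
    obtain ⟨a, b, ha, hb, rfl⟩ := hm
    refine ih σ ρ hρ _ ⟨a, b, ?_, hb, rfl⟩
    rw [interp_subst]
    exact ha _ _ (interp_cand B σ ρ hρ)
  | allR _ ih =>
    intro B X hX
    refine ih (scons B σ) (scons X ρ) (fun n => ?_) m (inCtx_lift hm)
    cases n with
    | zero => exact hX
    | succ n => exact hρ n

/-- **Cut elimination for ILAL.**  Every sequent `Γ ⊢ A` derivable in the sequent
calculus of Intuitionistic Light Affine Logic has a derivation that does not use the
`Cut` rule. -/
theorem ilal_cut_elimination {Γ : List Fm} {A : Fm} (h : Deriv true Γ A) :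
    Deriv false Γ A := by
  -- Each variable is interpreted by the contexts that prove it without cut.
  let ρ : ℕ → Set (Multiset Fm) := fun n => {m | Cf m (.var n)}
  have hc (B : Fm) : Cand B (interp B ρ) := by
    simpa only [ps_var] using interp_cand B .var ρ fun n => cand_cf _
  have hΓ : InCtx ρ Γ (Γ : Multiset Fm) := by
    clear h
    induction Γ with
    | nil => rfl
    | cons B Γ ih => exact ⟨{B}, Γ, (hc B).mem, ih, rfl⟩
  exact cf_coe.1 ((hc A).cf _ (soundness h .var ρ (fun n => cand_cf _) _ hΓ))
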